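/- Let G be a finite abelian group, and let G₀ ⊆ G be a minimal non-half-factorial LCN-set with min Δ(G₀) = max Δ*(G). Let g ∈ G₀ satisfy g ∈ ⟨G₀ \ {g}⟩. If k ∈ [1, ord(g)] is such that k·g ∉ ⟨E⟩ for every proper subset E ⊊ G₀ \ {g}, then there exists an atom A over G₀ with v_g(A) = k and cross number k(A) > 1. -/

import Mathlib

open Multiset

section Defs

variable {G : Type*} [AddCommGroup G]

/-- `S` is a zero-sum sequence over `G₀`: a multiset with entries in `G₀` and sum `0`. -/
def IsZeroSumSeq (G₀ : Set G) (S : Multiset G) : Prop :=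
  (∀ x ∈ S, x ∈ G₀) ∧ S.sum = 0

/-- `S` is an atom over `G₀`: a nonempty zero-sum sequence over `G₀` that is not the
union of two nonempty zero-sum sequences over `G₀`. -/
def IsAtomSeq (G₀ : Set G) (S : Multiset G) : Prop :=
  IsZeroSumSeq G₀ S ∧ S ≠ 0 ∧
    ∀ A B : Multiset G, IsZeroSumSeq G₀ A → IsZeroSumSeq G₀ B →
      A ≠ 0 → B ≠ 0 → S ≠ A + B

/-- The set of lengths of `B`: all `k` such that `B` is a union of `k` atoms over `G₀`. -/
def LengthSet (G₀ : Set G) (B : Multiset G) : Set ℕ :=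
  {k | ∃ l : Multiset (Multiset G), Multiset.card l = k ∧
      (∀ A ∈ l, IsAtomSeq G₀ A) ∧ l.sum = B}

/-- The set of successive distances of a set of naturals. -/
def DeltaOf (L : Set ℕ) : Set ℕ :=
  {d | ∃ x ∈ L, ∃ y ∈ L, x < y ∧ y - x = d ∧ ∀ z ∈ L, ¬(x < z ∧ z < y)}

/-- The set of distances `Δ(G₀)`. -/
def DeltaSet (G₀ : Set G) : Set ℕ :=
  {d | ∃ B : Multiset G, IsZeroSumSeq G₀ B ∧ B ≠ 0 ∧ d ∈ DeltaOf (LengthSet G₀ B)}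

/-- `G₀` is half-factorial if `Δ(G₀) = ∅`. -/
def IsHalfFactorialSet (G₀ : Set G) : Prop := DeltaSet G₀ = ∅

/-- `G₀` is minimal non-half-factorial if `Δ(G₀) ≠ ∅` and every proper subset is
half-factorial. -/
def IsMinNonHalfFactorial (G₀ : Set G) : Prop :=
  (DeltaSet G₀).Nonempty ∧ ∀ G₁ : Set G, G₁ ⊂ G₀ → DeltaSet G₁ = ∅

/-- The cross number `k(S) = Σ 1/ord(g)` of a multiset over `G`. -/
noncomputable def crossNumber (S : Multiset G) : ℚ :=
  (S.map (fun g => ((addOrderOf g : ℚ))⁻¹)).sum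

/-- `G₀` is an LCN-set if every atom over `G₀` has cross number at least 1. -/
def IsLCNSet (G₀ : Set G) : Prop :=
  ∀ U : Multiset G, IsAtomSeq G₀ U → 1 ≤ crossNumber U

/-- A subset of `G \ {0}` is independent if any integral linear relation on its elements
has all summands zero. -/
def IsIndependentSet (E : Set G) : Prop :=
  (0 : G) ∉ E ∧ ∀ s : Finset G, ↑s ⊆ E → ∀ f : G → ℤ,
    (∑ e ∈ s, f e • e) = 0 → ∀ e ∈ s, f e • e = 0

/-- `d` is a greatest common divisor of the set `S` of naturals. -/
def IsSetGcd (S : Set ℕ) (d : ℕ) : Prop :=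
  (∀ s ∈ S, d ∣ s) ∧ ∀ e : ℕ, (∀ s ∈ S, e ∣ s) → e ∣ d

end Defs

/-- The set of minimal distances `Δ*(G)`. -/
def DeltaStar (G : Type*) [AddCommGroup G] : Set ℕ :=
  {d | ∃ G₀ : Set G, (DeltaSet G₀).Nonempty ∧ d = sInf (DeltaSet G₀)}

/-- The `p`-rank of a finite abelian group: `log_p` of the order of the `p`-torsion
subgroup `{x | p • x = 0}`. -/
noncomputable def pRank (G : Type*) [AddCommGroup G] (p : ℕ) : ℕ :=
  Nat.log p (Nat.card {x : G // p • x = 0})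

/-- The rank of a finite abelian group: the maximum of the `p`-ranks over all primes. -/
noncomputable def rankG (G : Type*) [AddCommGroup G] : ℕ :=
  sSup {r : ℕ | ∃ p : ℕ, p.Prime ∧ r = pRank G p}


section Aux
variable {G : Type*} [AddCommGroup G]

lemma aux_cr_add (A B : Multiset G) : crossNumber (A + B) = crossNumber A + crossNumber B := by
  simp [crossNumber]

lemma aux_cr_zero : crossNumber (0 : Multiset G) = 0 := by simp [crossNumber]

lemma aux_cr_sum (l : Multiset (Multiset G)) :
    crossNumber l.sum = (l.map crossNumber).sum := by
  induction l using Multiset.induction_on with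
  | empty => simp [aux_cr_zero]
  | cons a s ih => simp [aux_cr_add, ih]

lemma aux_cr_replicate (m : ℕ) (x : G) :
    crossNumber (Multiset.replicate m x) = m * ((addOrderOf x : ℚ))⁻¹ := by
  simp [crossNumber]

lemma aux_zs_add {G₀ : Set G} {A B : Multiset G} (hA : IsZeroSumSeq G₀ A)
    (hB : IsZeroSumSeq G₀ B) : IsZeroSumSeq G₀ (A + B) := by
  refine ⟨?_, by simp [hA.2, hB.2]⟩
  intro x hx
  rcases Multiset.mem_add.1 hx with h | h
  · exact hA.1 x h
  · exact hB.1 x h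

lemma aux_zs_sub {G₀ : Set G} {A B : Multiset G} (hA : IsZeroSumSeq G₀ A)
    (hAB : IsZeroSumSeq G₀ (A + B)) : IsZeroSumSeq G₀ B := by
  refine ⟨fun x hx => hAB.1 x (Multiset.mem_add.2 (Or.inr hx)), ?_⟩
  have := hAB.2
  simpa [hA.2] using this

lemma aux_zs_sum {G₀ : Set G} {l : Multiset (Multiset G)}
    (h : ∀ A ∈ l, IsAtomSeq G₀ A) : IsZeroSumSeq G₀ l.sum := by
  induction l using Multiset.induction_on with
  | empty => exact ⟨by simp, by simp⟩
  | cons a s ih =>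
    rw [Multiset.sum_cons]
    exact aux_zs_add (h a (by simp)).1 (ih fun A hA => h A (by simp [hA]))

lemma aux_atom_le {G₀ : Set G} {A B : Multiset G} (hA : IsAtomSeq G₀ A)
    (hB : IsZeroSumSeq G₀ B) (hB0 : B ≠ 0) (h : B ≤ A) : B = A := by
  obtain ⟨C, rfl⟩ := Multiset.le_iff_exists_add.1 h
  by_cases hC : C = 0
  · simp [hC]
  · exact absurd rfl (hA.2.2 B C hB (aux_zs_sub hB hA.1) hB0 hC)

lemma aux_exists_fact {G₀ : Set G} (B : Multiset G) (hB : IsZeroSumSeq G₀ B) :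
    ∃ l : Multiset (Multiset G), (∀ A ∈ l, IsAtomSeq G₀ A) ∧ l.sum = B := by
  induction hn : Multiset.card B using Nat.strong_induction_on generalizing B with
  | _ n ih =>
  by_cases h0 : B = 0
  · exact ⟨0, by simp, by simp [h0]⟩
  by_cases hat : IsAtomSeq G₀ B
  · exact ⟨{B}, by simpa using hat, by simp⟩
  · simp only [IsAtomSeq, not_and, not_forall] at hat
    obtain ⟨A, C, hA, hC, hA0, hC0, h⟩ := hat hB h0
    have h : B = A + C := by simpa using h
    have ha : 0 < Multiset.card A := Multiset.card_pos.2 hA0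
    have hc : 0 < Multiset.card C := Multiset.card_pos.2 hC0
    have hs : Multiset.card B = Multiset.card A + Multiset.card C := by simp [h]
    obtain ⟨l1, h1, h1'⟩ := ih _ (by omega) A hA rfl
    obtain ⟨l2, h2, h2'⟩ := ih _ (by omega) C hC rfl
    refine ⟨l1 + l2, ?_, by simp [h1', h2', h]⟩
    intro X hX
    rcases Multiset.mem_add.1 hX with h | h
    · exact h1 X h
    · exact h2 X h

lemma aux_atom_replicate [Finite G] {G₀ : Set G} {x : G} (hx : x ∈ G₀) :
    IsAtomSeq G₀ (Multiset.replicate (addOrderOf x) x) := by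
  have hpos := addOrderOf_pos x
  refine ⟨⟨?_, ?_⟩, ?_, ?_⟩
  · intro y hy
    rw [Multiset.eq_of_mem_replicate hy]; exact hx
  · simp [addOrderOf_nsmul_eq_zero]
  · intro h
    have := congrArg Multiset.card h
    rw [Multiset.card_replicate, Multiset.card_zero] at this
    omega
  · intro A B hA hB hA0 hB0 h
    have hA' : A = Multiset.replicate (Multiset.card A) x := by
      rw [Multiset.eq_replicate]
      refine ⟨rfl, fun b hb => ?_⟩
      have : b ∈ A + B := Multiset.mem_add.2 (Or.inl hb)
      rw [← h] at this
      exact Multiset.eq_of_mem_replicate this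
    have h1 : Multiset.card A • x = 0 := by
      have := hA.2
      rw [hA'] at this
      simpa using this
    have h2 := Nat.le_of_dvd (Multiset.card_pos.2 hA0) (addOrderOf_dvd_of_nsmul_eq_zero h1)
    have h3 := congrArg Multiset.card h
    have h4 := Multiset.card_pos.2 hB0
    simp at h3
    omega

lemma aux_cr_elem [Finite G] (x : G) :
    crossNumber (Multiset.replicate (addOrderOf x) x) = 1 := by
  have hpos := addOrderOf_pos x
  rw [aux_cr_replicate]
  have : (addOrderOf x : ℚ) ≠ 0 := by positivity
  field_simp

lemma aux_atom_mono {G₀ G₁ : Set G} (h : G₁ ⊆ G₀) {U : Multiset G} (hU : IsAtomSeq G₀ U)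
    (hs : ∀ x ∈ U, x ∈ G₁) : IsAtomSeq G₁ U := by
  refine ⟨⟨hs, hU.1.2⟩, hU.2.1, ?_⟩
  intro A B hA hB hA0 hB0
  exact hU.2.2 A B ⟨fun x hx => h (hA.1 x hx), hA.2⟩ ⟨fun x hx => h (hB.1 x hx), hB.2⟩ hA0 hB0

lemma aux_deltaOf {L : Set ℕ} {x y : ℕ} (hx : x ∈ L) (hy : y ∈ L) (h : x < y) :
    ∃ d ∈ DeltaOf L, d ≤ y - x := by
  classical
  have hex : ∃ z, z ∈ L ∧ x < z := ⟨y, hy, h⟩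
  refine ⟨Nat.find hex - x, ⟨x, hx, Nat.find hex, (Nat.find_spec hex).1,
    (Nat.find_spec hex).2, rfl, ?_⟩, ?_⟩
  · intro z hz ⟨h1, h2⟩
    exact Nat.find_min hex h2 ⟨hz, h1⟩
  · have : Nat.find hex ≤ y := Nat.find_min' hex ⟨hy, h⟩
    omega

lemma aux_len_zero {G₀ : Set G} {x : ℕ} (hx : x ∈ LengthSet G₀ (0 : Multiset G)) : x = 0 := by
  obtain ⟨l, rfl, h1, h2⟩ := hx
  rw [Multiset.card_eq_zero]
  by_contra hl
  obtain ⟨A, hA⟩ := Multiset.exists_mem_of_ne_zero hl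
  have := Multiset.le_sum_of_mem hA
  rw [h2] at this
  exact (h1 A hA).2.1 (by simpa using this)

lemma aux_delta_le {G₀ : Set G} {B : Multiset G} {x y : ℕ} (hx : x ∈ LengthSet G₀ B)
    (hy : y ∈ LengthSet G₀ B) (h : x < y) :
    ∃ d ∈ DeltaSet G₀, d ≤ y - x := by
  have hB : IsZeroSumSeq G₀ B := by
    obtain ⟨l, _, h1, h2⟩ := hx
    rw [← h2]; exact aux_zs_sum h1
  have hB0 : B ≠ 0 := by
    rintro rfl
    have := aux_len_zero hy
    omega
  obtain ⟨d, hd, hle⟩ := aux_deltaOf hx hy h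
  exact ⟨d, ⟨B, hB, hB0, hd⟩, hle⟩

lemma aux_sInf_le {G₀ : Set G} {B : Multiset G} {x y : ℕ} (hx : x ∈ LengthSet G₀ B)
    (hy : y ∈ LengthSet G₀ B) (h : x < y) : sInf (DeltaSet G₀) + x ≤ y := by
  obtain ⟨d, hd, hle⟩ := aux_delta_le hx hy h
  have := Nat.sInf_le hd
  omega

lemma aux_len_add {G₀ : Set G} {B C : Multiset G} {x y : ℕ} (hx : x ∈ LengthSet G₀ B)
    (hy : y ∈ LengthSet G₀ C) : x + y ∈ LengthSet G₀ (B + C) := by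
  obtain ⟨l, rfl, h1, h2⟩ := hx
  obtain ⟨l', rfl, h1', h2'⟩ := hy
  refine ⟨l + l', by simp, ?_, by simp [h2, h2']⟩
  intro X hX
  rcases Multiset.mem_add.1 hX with h | h
  · exact h1 X h
  · exact h1' X h

lemma aux_len_atom {G₀ : Set G} {U : Multiset G} (hU : IsAtomSeq G₀ U) :
    1 ∈ LengthSet G₀ U := ⟨{U}, by simp, by simpa using hU, by simp⟩

lemma aux_len_nsmul {G₀ : Set G} {B : Multiset G} {x : ℕ} (hx : x ∈ LengthSet G₀ B) (m : ℕ) :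
    m * x ∈ LengthSet G₀ (m • B) := by
  induction m with
  | zero => exact ⟨0, by simp, by simp, by simp⟩
  | succ m ih => rw [succ_nsmul, Nat.succ_mul]; exact aux_len_add ih hx

lemma aux_len_finset {G₀ : Set G} {ι : Type*} (s : Finset ι) (f : ι → Multiset G) (c : ι → ℕ)
    (h : ∀ i ∈ s, c i ∈ LengthSet G₀ (f i)) :
    ∑ i ∈ s, c i ∈ LengthSet G₀ (∑ i ∈ s, f i) := by
  classical
  induction s using Finset.induction_on with
  | empty => exact ⟨0, by simp, by simp, by simp⟩
  | insert a s ha ih =>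
    rw [Finset.sum_insert ha, Finset.sum_insert ha]
    exact aux_len_add (h a (by simp)) (ih fun i hi => h i (by simp [hi]))

lemma aux_cr_ge_len {G₀ : Set G} (hL : IsLCNSet G₀) (l : Multiset (Multiset G))
    (h : ∀ A ∈ l, IsAtomSeq G₀ A) : (Multiset.card l : ℚ) ≤ crossNumber l.sum := by
  rw [aux_cr_sum]
  induction l using Multiset.induction_on with
  | empty => simp
  | cons a s ih =>
    have h1 := hL a (h a (by simp))
    have h2 := ih fun A hA => h A (by simp [hA])
    simp
    linarith

lemma aux_cr_eq_len (l : Multiset (Multiset G))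
    (h : ∀ A ∈ l, crossNumber A = 1) : crossNumber l.sum = Multiset.card l := by
  rw [aux_cr_sum]
  induction l using Multiset.induction_on with
  | empty => simp
  | cons a s ih =>
    have h1 := h a (by simp)
    have h2 := ih fun A hA => h A (by simp [hA])
    simp [h1, h2]
    ring

lemma aux_cr_gt_len {G₀ : Set G} (hL : IsLCNSet G₀) (l : Multiset (Multiset G))
    (h : ∀ A ∈ l, IsAtomSeq G₀ A) {A : Multiset G} (hA : A ∈ l) (hA1 : 1 < crossNumber A) :
    (Multiset.card l : ℚ) < crossNumber l.sum := by
  obtain ⟨s, rfl⟩ := Multiset.exists_cons_of_mem hA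
  have := aux_cr_ge_len hL s fun A hA => h A (by simp [hA])
  rw [Multiset.sum_cons, aux_cr_add]
  simp
  linarith

lemma aux_cr_count [Fintype G] [DecidableEq G] (S : Multiset G) :
    crossNumber S = ∑ x : G, (S.count x : ℚ) * ((addOrderOf x : ℚ))⁻¹ := by
  unfold crossNumber
  rw [Finset.sum_multiset_map_count]
  simp only [nsmul_eq_mul]
  apply Finset.sum_subset (Finset.subset_univ _)
  intro x _ hx
  simp [Multiset.count_eq_zero.2 (by simpa using hx)]

lemma aux_sum_count [Fintype G] [DecidableEq G] (S : Multiset G) :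
    S.sum = ∑ x : G, S.count x • x := by
  rw [Finset.sum_multiset_count]
  apply Finset.sum_subset (Finset.subset_univ _)
  intro x _ hx
  simp [Multiset.count_eq_zero.2 (by simpa using hx)]

/-- Atoms over half-factorial sets have cross number one. -/
lemma aux_hf_cr [Fintype G] [DecidableEq G] {G₁ : Set G} (h : DeltaSet G₁ = ∅)
    {U : Multiset G} (hU : IsAtomSeq G₁ U) : crossNumber U = 1 := by
  set N := Fintype.card G with hN
  have hNpos : 0 < N := Fintype.card_pos
  have h1 : N * 1 ∈ LengthSet G₁ (N • U) := aux_len_nsmul (aux_len_atom hU) N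
  have key : N • U = ∑ x : G, (U.count x * (N / addOrderOf x)) •
      Multiset.replicate (addOrderOf x) x := by
    ext y
    simp only [Multiset.count_nsmul, Multiset.count_sum', Multiset.count_replicate]
    rw [Finset.sum_eq_single y]
    · have := Nat.div_mul_cancel (addOrderOf_dvd_card (x := y))
      simp only [if_true]
      rw [mul_assoc, hN, this, mul_comm]
    · intro b _ hb; simp [hb]
    · simp
  have h2 : ∑ x : G, (U.count x * (N / addOrderOf x)) * 1 ∈ LengthSet G₁ (N • U) := by
    rw [key]
    apply aux_len_finset
    intro x _
    by_cases hx : x ∈ U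
    · exact aux_len_nsmul (aux_len_atom (aux_atom_replicate (hU.1.1 x hx))) _
    · rw [Multiset.count_eq_zero.2 hx]
      exact ⟨0, by simp, by simp, by simp⟩
  have heq : N * 1 = ∑ x : G, (U.count x * (N / addOrderOf x)) * 1 := by
    rcases lt_trichotomy (N * 1) (∑ x : G, (U.count x * (N / addOrderOf x)) * 1) with h3 | h3 | h3
    · obtain ⟨d, hd, _⟩ := aux_delta_le h1 h2 h3
      rw [h] at hd; exact absurd hd (by simp)
    · exact h3
    · obtain ⟨d, hd, _⟩ := aux_delta_le h2 h1 h3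
      rw [h] at hd; exact absurd hd (by simp)
  have h4 : (N : ℚ) * crossNumber U = N := by
    rw [aux_cr_count, Finset.mul_sum]
    have h5 : (N : ℚ) = ((N * 1 : ℕ) : ℚ) := by simp
    conv_rhs => rw [h5, heq]
    push_cast
    apply Finset.sum_congr rfl
    intro x _
    have hd : addOrderOf x ∣ N := addOrderOf_dvd_card
    have hp := addOrderOf_pos x
    have hp' : (addOrderOf x : ℚ) ≠ 0 := by positivity
    rw [Nat.cast_div hd hp']
    field_simp
  have : (N : ℚ) ≠ 0 := by positivity
  field_simp at h4
  exact h4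

end Aux

section AuxB
variable {G : Type*} [AddCommGroup G]

lemma aux_star_le [Finite G] {G₁ : Set G} (h : (DeltaSet G₁).Nonempty) :
    sInf (DeltaSet G₁) ≤ sSup (DeltaStar G) := by
  apply le_csSup
  · have : DeltaStar G ⊆ Set.range (fun G₀ : Set G => sInf (DeltaSet G₀)) := by
      rintro d ⟨G₀, _, rfl⟩
      exact ⟨G₀, rfl⟩
    exact ((Set.finite_range _).subset this).bddAbove
  · exact ⟨G₁, h, rfl⟩

lemma aux_weight_sum {W : G → ℤ} {M q : ℤ} (l : Multiset (Multiset G))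
    (h : ∀ A ∈ l, M * q ∣ (A.map W).sum - M) :
    M * q ∣ (l.sum.map W).sum - M * Multiset.card l := by
  induction l using Multiset.induction_on with
  | empty => simp
  | cons a s ih =>
    have h1 := h a (by simp)
    have h2 := ih fun A hA => h A (by simp [hA])
    have := dvd_add h1 h2
    simp only [Multiset.sum_cons, Multiset.map_add, Multiset.sum_add, Multiset.card_cons]
    have e : (a.map W).sum + (s.sum.map W).sum - M * ((Multiset.card s + 1 : ℕ) : ℤ) =
        (a.map W).sum - M + ((s.sum.map W).sum - M * Multiset.card s) := by
      push_cast
      ring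
    rw [e]
    exact this

lemma aux_weight [Finite G] {G₁ : Set G} (W : G → ℤ) (M : ℤ) (q : ℕ) (hM : M ≠ 0)
    (h : ∀ A, IsAtomSeq G₁ A → M * q ∣ (A.map W).sum - M)
    (hne : (DeltaSet G₁).Nonempty) : q ≤ sSup (DeltaStar G) := by
  refine le_trans ?_ (aux_star_le hne)
  obtain ⟨B, _, _, x, ⟨l, rfl, hl1, hl2⟩, y, ⟨l', rfl, hl1', hl2'⟩, hxy, hd, -⟩ :=
    Nat.sInf_mem hne
  have h1 := aux_weight_sum (W := W) l fun A hA => h A (hl1 A hA)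
  have h2 := aux_weight_sum (W := W) l' fun A hA => h A (hl1' A hA)
  rw [hl2] at h1
  rw [hl2'] at h2
  have h3 := dvd_sub h1 h2
  have h4 : M * q ∣ M * ((Multiset.card l' : ℤ) - Multiset.card l) := by
    have e : M * ((Multiset.card l' : ℤ) - Multiset.card l) =
        (B.map W).sum - M * Multiset.card l - ((B.map W).sum - M * Multiset.card l') := by ring
    rw [e]
    exact h3
  have h5 := (mul_dvd_mul_iff_left hM).1 h4
  have h6 := Int.le_of_dvd (by omega) h5
  omega

/-- The example `{a, -a}`. -/
lemma aux_order_le [Fintype G] [DecidableEq G] (a : G) :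
    addOrderOf a ≤ sSup (DeltaStar G) + 2 := by
  by_cases hm : addOrderOf a ≤ 2
  · omega
  push Not at hm
  set m := addOrderOf a with hmdef
  have hna : a ≠ -a := by
    intro h
    have h2 : (2 : ℕ) • a = 0 := by
      rw [two_nsmul]; nth_rewrite 2 [h]; simp
    have := Nat.le_of_dvd (by omega) (addOrderOf_dvd_of_nsmul_eq_zero h2)
    omega
  have hm' : addOrderOf (-a) = m := by rw [addOrderOf_neg]
  let G₁ : Set G := {a, -a}
  have ha : a ∈ G₁ := by simp [G₁]
  have hb : -a ∈ G₁ := by simp [G₁]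
  have hpair : IsAtomSeq G₁ {a, -a} := by
    refine ⟨⟨by intro x hx; simpa [G₁] using hx, by simp⟩, by simp, ?_⟩
    intro A B hA hB hA0 hB0 h
    have hc := congrArg Multiset.card h
    have h1 := Multiset.card_pos.2 hA0
    have h2 := Multiset.card_pos.2 hB0
    simp at hc
    have h3 : Multiset.card A = 1 := by omega
    obtain ⟨x, rfl⟩ := Multiset.card_eq_one.1 h3
    have hx : x = 0 := by simpa using hA.2
    have : x ∈ G₁ := hA.1 x (by simp)
    have h0 : a = 0 := by
      rcases this with h | h
      · rw [← h, hx]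
      · have h : x = -a := h
        rw [hx] at h
        simpa using h.symm
    rw [h0] at hna
    simp at hna
  have key : m - 2 ≤ sSup (DeltaStar G) := by
    apply aux_weight (G₁ := G₁) (fun x => if x = a then 1 else (m : ℤ) - 1) m (m - 2) (by omega)
    · intro U hU
      have hcast : ((m - 2 : ℕ) : ℤ) = (m : ℤ) - 2 := by omega
      rw [hcast]
      by_cases h1 : a ∈ U
      · by_cases h2 : -a ∈ U
        · have : ({a, -a} : Multiset G) = U := by
            apply aux_atom_le hU hpair.1 (by simp)
            rw [Multiset.insert_eq_cons, Multiset.cons_le_of_notMem (by simpa using hna)]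
            exact ⟨h1, by simpa using h2⟩
          rw [← this]
          simp [hna.symm]
        · have hr : U = Multiset.replicate (Multiset.card U) a := by
            rw [Multiset.eq_replicate]
            refine ⟨rfl, fun b hb => ?_⟩
            rcases hU.1.1 b hb with h | h
            · exact h
            · have h : b = -a := h
              rw [h] at hb; exact absurd hb h2
          have hdvd : m ∣ Multiset.card U := by
            apply addOrderOf_dvd_of_nsmul_eq_zero
            have := hU.1.2
            rw [hr] at this
            simpa using this
          have hUe : Multiset.replicate m a = U := by
            apply aux_atom_le hU (aux_atom_replicate ha).1 (aux_atom_replicate ha).2.1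
            rw [hr, Multiset.replicate_le_replicate]
            exact Nat.le_of_dvd (Multiset.card_pos.2 hU.2.1) hdvd
          rw [← hUe]
          simp
      · have hr : U = Multiset.replicate (Multiset.card U) (-a) := by
          rw [Multiset.eq_replicate]
          refine ⟨rfl, fun b hb => ?_⟩
          rcases hU.1.1 b hb with h | h
          · rw [h] at hb; exact absurd hb h1
          · exact h
        have hdvd : m ∣ Multiset.card U := by
          rw [← hm']
          apply addOrderOf_dvd_of_nsmul_eq_zero
          have := hU.1.2
          rw [hr] at this
          simpa using this
        have hUe : Multiset.replicate m (-a) = U := by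
          have hat := aux_atom_replicate hb
          rw [hm'] at hat
          apply aux_atom_le hU hat.1 hat.2.1
          rw [hr, Multiset.replicate_le_replicate]
          exact Nat.le_of_dvd (Multiset.card_pos.2 hU.2.1) hdvd
        rw [← hUe]
        simp [hna.symm]
        exact ⟨1, by ring⟩
    · have l1 : m * 1 ∈ LengthSet G₁ (m • ({a, -a} : Multiset G)) :=
        aux_len_nsmul (aux_len_atom hpair) m
      have l2 : 1 + 1 ∈ LengthSet G₁ (m • ({a, -a} : Multiset G)) := by
        have hat := aux_atom_replicate hb
        rw [hm'] at hat
        have := aux_len_add (aux_len_atom (aux_atom_replicate ha)) (aux_len_atom hat)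
        convert this using 2
        rw [Multiset.insert_eq_cons, ← Multiset.singleton_add, nsmul_add,
          Multiset.nsmul_singleton, Multiset.nsmul_singleton]
      obtain ⟨d, hd, _⟩ := aux_delta_le l2 l1 (by omega)
      exact ⟨d, hd⟩
  omega

end AuxB

section AuxC
variable {G : Type*} [AddCommGroup G]

/-- The example: independent elements of order `p` together with their sum. -/
lemma aux_indep_le [Fintype G] [DecidableEq G] (p : ℕ) (hp : p.Prime) (B : Finset G)
    (hpB : ∀ x ∈ B, p • x = 0)
    (hind : ∀ c : G → ℕ, ∑ x ∈ B, c x • x = 0 → ∀ x ∈ B, p ∣ c x) :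
    B.card ≤ sSup (DeltaStar G) + 1 := by
  by_cases hs : B.card ≤ 1
  · omega
  push Not at hs
  have hp2 := hp.two_le
  have hp1 : ¬ p ∣ 1 := by
    intro h; have := Nat.le_of_dvd one_pos h; omega
  have hord : ∀ x : G, p • x = 0 → x ≠ 0 → addOrderOf x = p := by
    intro x h1 h2
    have : Fact p.Prime := ⟨hp⟩
    exact addOrderOf_eq_prime h1 h2
  have hB0 : ∀ x ∈ B, x ≠ 0 := by
    intro x hx h0
    have := hind (fun y => if y = x then 1 else 0) (by simp [h0]) x hx
    simp at this
    omega
  set e := ∑ x ∈ B, x with he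
  have hpe : p • e = 0 := by
    rw [he, Finset.smul_sum]; exact Finset.sum_eq_zero hpB
  have heB : e ∉ B := by
    intro h
    obtain ⟨z, hz, hze⟩ := Finset.exists_mem_ne hs e
    have := hind (fun y => if y = e then 0 else 1) (by
      have h1 : ∑ x ∈ B.erase e, x = 0 := by
        have := Finset.add_sum_erase B (fun x => x) h
        rw [← he] at this
        simpa using this
      rw [← Finset.add_sum_erase _ _ h]
      simp only [if_true, zero_smul, zero_add]
      rw [← h1]
      apply Finset.sum_congr rfl
      intro x hx
      simp [(Finset.mem_erase.1 hx).1]) z hz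
    simp [hze] at this
    omega
  have he0 : e ≠ 0 := by
    intro h
    obtain ⟨z, hz, hze⟩ := Finset.exists_mem_ne hs e
    have := hind (fun y => 1) (by simpa [← he] using h) z hz
    exact hp1 this
  have hoe := hord e hpe he0
  have hoB : ∀ x ∈ B, addOrderOf x = p := fun x hx => hord x (hpB x hx) (hB0 x hx)
  let F : Finset G := insert e B
  let G₁ : Set G := ↑F
  have hG₁ : ∀ x, x ∈ G₁ ↔ x = e ∨ x ∈ B := by intro x; simp [G₁, F]
  have hsum : ∀ U : Multiset G, (∀ x ∈ U, x ∈ G₁) →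
      U.sum = ∑ x ∈ B, (U.count e + U.count x) • x := by
    intro U hU
    rw [aux_sum_count]
    have : ∑ x : G, U.count x • x = ∑ x ∈ F, U.count x • x := by
      symm
      apply Finset.sum_subset (Finset.subset_univ _)
      intro x _ hx
      rw [Multiset.count_eq_zero.2 (fun h => hx (hU x h)), zero_smul]
    rw [this, Finset.sum_insert heB]
    simp only [add_smul, Finset.sum_add_distrib]
    rw [he, Finset.smul_sum]
  have hdvd : ∀ U : Multiset G, IsZeroSumSeq G₁ U → ∀ x ∈ B, p ∣ U.count e + U.count x := by
    intro U hU
    apply hind (fun x => U.count e + U.count x)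
    rw [← hsum U hU.1, hU.2]
  have heG : e ∈ G₁ := (hG₁ e).2 (Or.inl rfl)
  have hBG : ∀ x ∈ B, x ∈ G₁ := fun x hx => (hG₁ x).2 (Or.inr hx)
  have hne0 : ∀ U : Multiset G, IsZeroSumSeq G₁ U → U ≠ 0 →
      ∃ x ∈ B, U.count e + U.count x ≠ 0 := by
    intro U hU hU0
    obtain ⟨y, hy⟩ := Multiset.exists_mem_of_ne_zero hU0
    have hy' := Multiset.count_pos.2 hy
    rcases (hG₁ y).1 (hU.1 y hy) with hye | hyB
    · rw [hye] at hy'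
      obtain ⟨z, hz, hze⟩ := Finset.exists_mem_ne hs y
      exact ⟨z, hz, by omega⟩
    · exact ⟨y, hyB, by omega⟩
  let T : ℕ → Multiset G := fun j => Multiset.replicate j e +
    ∑ x ∈ B, Multiset.replicate (p - j) x
  have hTe : ∀ j, (T j).count e = j := by
    intro j
    simp only [T, Multiset.count_add, Multiset.count_replicate_self, Multiset.count_sum']
    rw [Finset.sum_eq_zero]
    · simp
    · intro x hx
      rw [Multiset.count_replicate, if_neg]
      rintro rfl; exact heB hx
  have hTx : ∀ j, ∀ x ∈ B, (T j).count x = p - j := by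
    intro j x hx
    have hxe : ¬ e = x := by rintro rfl; exact heB hx
    simp only [T, Multiset.count_add, Multiset.count_sum', Multiset.count_replicate, if_neg hxe]
    simp [hx]
  have hTmem : ∀ j, ∀ x ∈ T j, x ∈ G₁ := by
    intro j x hx
    simp only [T, Multiset.mem_add, Multiset.mem_sum] at hx
    rcases hx with h | ⟨y, hy, h⟩
    · rw [Multiset.eq_of_mem_replicate h]; exact heG
    · rw [Multiset.eq_of_mem_replicate h]; exact hBG y hy
  have hTat : ∀ j, 1 ≤ j → j < p → IsAtomSeq G₁ (T j) := by
    intro j hj1 hj2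
    have hT0 : IsZeroSumSeq G₁ (T j) := by
      refine ⟨hTmem j, ?_⟩
      rw [hsum _ (hTmem j)]
      apply Finset.sum_eq_zero
      intro x hx
      rw [hTe, hTx j x hx, Nat.add_sub_cancel' hj2.le]
      exact hpB x hx
    have hone : ∀ A C : Multiset G, IsZeroSumSeq G₁ A → A ≠ 0 → T j = A + C → A.count e = j := by
      intro A C hA hA0 h
      obtain ⟨x, hx, hxne⟩ := hne0 A hA hA0
      have h1 := Nat.le_of_dvd (by omega) (hdvd A hA x hx)
      have h2 := hTe j
      have h3 := hTx j x hx
      rw [h, Multiset.count_add] at h2 h3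
      omega
    refine ⟨hT0, ?_, ?_⟩
    · intro h
      have := hTe j
      rw [h] at this
      simp at this
      omega
    · intro A C hA hC hA0 hC0 h
      have h1 := hone A C hA hA0 h
      have h2 := hone C A hC hC0 (by rw [h, add_comm])
      have h3 := hTe j
      rw [h, Multiset.count_add] at h3
      omega
  have key : B.card - 1 ≤ sSup (DeltaStar G) := by
    apply aux_weight (G₁ := G₁)
      (fun x => if x = e then (p : ℤ) - B.card * (p - 1) else 1) p (B.card - 1) (by omega)
    · intro U hU
      have hcast : ((B.card - 1 : ℕ) : ℤ) = (B.card : ℤ) - 1 := by omega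
      rw [hcast]
      by_cases h1 : p ≤ U.count e
      · have hat := aux_atom_replicate heG
        rw [hoe] at hat
        have := aux_atom_le hU hat.1 hat.2.1 (Multiset.le_count_iff_replicate_le.1 h1)
        rw [← this]
        simp only [Multiset.map_replicate, if_true, Multiset.sum_replicate, nsmul_eq_mul]
        exact ⟨-((p : ℤ) - 1), by ring⟩
      push Not at h1
      by_cases h2 : ∃ x ∈ B, p ≤ U.count x
      · obtain ⟨x, hx, h2⟩ := h2
        have hat := aux_atom_replicate (hBG x hx)
        rw [hoB x hx] at hat
        have := aux_atom_le hU hat.1 hat.2.1 (Multiset.le_count_iff_replicate_le.1 h2)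
        rw [← this]
        have hxe : ¬ x = e := by rintro rfl; exact heB hx
        simp [hxe]
      push Not at h2
      have hcases : ∀ x ∈ B, U.count e + U.count x = 0 ∨ U.count e + U.count x = p := by
        intro x hx
        obtain ⟨c, hc⟩ := hdvd U hU.1 x hx
        have h3 := h2 x hx
        have hc2 : c < 2 := by
          by_contra hcon
          push Not at hcon
          have : p * 2 ≤ p * c := Nat.mul_le_mul_left p hcon
          omega
        interval_cases c
        · left; omega
        · right; omega
      obtain ⟨x, hx, hxne⟩ := hne0 U hU.1 hU.2.1
      have hx' : U.count e + U.count x = p := (hcases x hx).resolve_left hxne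
      have hall : ∀ y ∈ B, (U.count y : ℤ) = p - U.count e := by
        intro y hy
        have h3 := h2 x hx
        rcases hcases y hy with h | h <;> omega
      have hW : (U.map (fun x => if x = e then (p : ℤ) - B.card * (p - 1) else 1)).sum =
          U.count e * ((p : ℤ) - B.card * (p - 1)) + B.card * (p - U.count e) := by
        rw [Finset.sum_multiset_map_count]
        have : ∑ m ∈ U.toFinset, U.count m • (if m = e then (p : ℤ) - B.card * (p - 1) else 1) =
            ∑ m ∈ F, U.count m • (if m = e then (p : ℤ) - B.card * (p - 1) else 1) := by
          apply Finset.sum_subset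
          · intro x hx
            exact hU.1.1 x (by simpa using hx)
          · intro x _ hx
            rw [Multiset.count_eq_zero.2 (by simpa using hx), zero_smul]
        rw [this, Finset.sum_insert heB, if_pos rfl, nsmul_eq_mul]
        congr 1
        rw [Finset.sum_congr rfl (g := fun _ => (p : ℤ) - U.count e)]
        · rw [Finset.sum_const, nsmul_eq_mul]
        · intro y hy
          have hye : ¬ y = e := by rintro rfl; exact heB hy
          rw [if_neg hye, nsmul_eq_mul, mul_one]
          exact hall y hy
      rw [hW]
      exact ⟨1 - U.count e, by ring⟩
    · have hR : T 1 + T (p - 1) = Multiset.replicate p e + ∑ x ∈ B, Multiset.replicate p x := by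
        have hT' : ∀ j, T j = Multiset.replicate j e +
          ∑ x ∈ B, Multiset.replicate (p - j) x := fun j => rfl
        rw [hT', hT', add_add_add_comm, ← Multiset.replicate_add, ← Finset.sum_add_distrib]
        congr 1
        · congr 1; omega
        · apply Finset.sum_congr rfl
          intro x _
          rw [← Multiset.replicate_add]; congr 1; omega
      have l1 : 1 + 1 ∈ LengthSet G₁ (T 1 + T (p - 1)) :=
        aux_len_add (aux_len_atom (hTat 1 le_rfl (by omega)))
          (aux_len_atom (hTat (p - 1) (by omega) (by omega)))
      have l2 : 1 + ∑ x ∈ B, 1 ∈ LengthSet G₁ (T 1 + T (p - 1)) := by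
        rw [hR]
        apply aux_len_add
        · have hat := aux_atom_replicate heG
          rw [hoe] at hat
          exact aux_len_atom hat
        · apply aux_len_finset
          intro x hx
          have hat := aux_atom_replicate (hBG x hx)
          rw [hoB x hx] at hat
          exact aux_len_atom hat
      obtain ⟨d, hd, _⟩ := aux_delta_le l1 l2 (by simp; omega)
      exact ⟨d, hd⟩
  omega

end AuxC

section AuxD
variable {G : Type*} [AddCommGroup G]

lemma aux_torsion_aux [Fintype G] [DecidableEq G] (p : ℕ) (hp : p.Prime) (r : ℕ)
    {V : Type*} [AddCommGroup V] [Finite V] [Fact p.Prime] [Module (ZMod p) V]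
    (φ : V →+ G) (hφ : Function.Injective φ)
    (h : p ^ r ≤ Nat.card V) :
    r ≤ sSup (DeltaStar G) + 1 := by
  have hfin : Module.Finite (ZMod p) V := Module.Finite.of_finite
  have hcard := Module.natCard_eq_pow_finrank (K := ZMod p) (V := V)
  rw [Nat.card_zmod] at hcard
  rw [hcard] at h
  have hr : r ≤ Module.finrank (ZMod p) V := (Nat.pow_le_pow_iff_right hp.one_lt).1 h
  obtain ⟨b⟩ : Nonempty (Module.Basis (Fin (Module.finrank (ZMod p) V)) (ZMod p) V) :=
    ⟨Module.finBasis (ZMod p) V⟩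
  have hf : Function.Injective (fun i => φ (b i)) := fun i j hij => b.injective (hφ hij)
  have key := aux_indep_le p hp (Finset.univ.image (fun i => φ (b i))) (by
    intro x hx
    obtain ⟨i, _, rfl⟩ := Finset.mem_image.1 hx
    have h0 : p • b i = 0 := by
      rw [← Nat.cast_smul_eq_nsmul (ZMod p)]
      simp
    change p • φ (b i) = 0
    rw [← AddMonoidHom.map_nsmul, h0, AddMonoidHom.map_zero]) (by
    intro c hc x hx
    obtain ⟨i, _, rfl⟩ := Finset.mem_image.1 hx
    rw [Finset.sum_image (fun a _ b _ h => hf h)] at hc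
    have h1 : ∑ i, (c (φ (b i)) : ZMod p) • b i = 0 := by
      apply hφ
      simp only [Nat.cast_smul_eq_nsmul]
      rw [_root_.map_sum, AddMonoidHom.map_zero, ← hc]
      apply Finset.sum_congr rfl
      intro i _
      rw [AddMonoidHom.map_nsmul]
    have h2 := Fintype.linearIndependent_iff.1 b.linearIndependent _ h1 i
    exact (ZMod.natCast_eq_zero_iff _ _).1 h2)
  rw [Finset.card_image_of_injective _ hf] at key
  simp at key
  omega

lemma aux_torsion_le [Fintype G] [DecidableEq G] (p : ℕ) (hp : p.Prime) (r : ℕ)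
    (h : p ^ r ≤ Nat.card (nsmulAddMonoidHom (α := G) p).ker) :
    r ≤ sSup (DeltaStar G) + 1 := by
  have hf : Fact p.Prime := ⟨hp⟩
  have hpV : ∀ x : (nsmulAddMonoidHom (α := G) p).ker, p • x = 0 := by
    intro x
    apply Subtype.ext
    exact x.2
  letI : Module (ZMod p) (nsmulAddMonoidHom (α := G) p).ker := AddCommGroup.zmodModule hpV
  exact aux_torsion_aux p hp r (nsmulAddMonoidHom (α := G) p).ker.subtype
    Subtype.val_injective h

lemma aux_rank_le [Fintype G] [DecidableEq G] (p : ℕ) (hp : p.Prime) (E : Finset G) (g : G)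
    (hgen : g ∈ AddSubgroup.closure (E : Set G))
    (hdiv : ∀ x ∈ E, ∀ j : ℕ, j • g ∈ AddSubgroup.closure ((E : Set G) \ {x}) → p ∣ j) :
    E.card ≤ sSup (DeltaStar G) + 1 := by
  obtain ⟨a, M, hM, hN⟩ := Nat.exists_eq_pow_mul_and_not_dvd
    (Fintype.card_ne_zero (α := G)) p hp.ne_one
  let mu := nsmulAddMonoidHom (α := G) M
  have hmu : ∀ x, mu x = M • x := fun x => rfl
  let K := (AddSubgroup.closure (E : Set G)).map mu
  have hkill : ∀ y ∈ K, p ^ a • y = 0 := by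
    rintro y ⟨z, _, rfl⟩
    rw [hmu, ← mul_nsmul', ← hN]
    exact card_nsmul_eq_zero
  have hEK : ∀ x ∈ E, M • x ∈ K := fun x hx => ⟨x, AddSubgroup.subset_closure hx, rfl⟩
  -- the key independence statement
  have hind : ∀ x0 ∈ E, ∀ d : ℤ, ¬ (p : ℤ) ∣ d →
      ∀ u ∈ (AddSubgroup.closure ((E : Set G) \ {x0})).map mu, ∀ v ∈ K,
      d • (M • x0) ≠ u + p • v := by
    intro x0 hx0 d hd u hu v hv heq
    set K0 := (AddSubgroup.closure ((E : Set G) \ {x0})).map mu with hK0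
    have hK0K : K0 ≤ K := AddSubgroup.map_mono (AddSubgroup.closure_mono Set.sdiff_subset)
    have hcop : IsCoprime d (p : ℤ) := by
      rw [isCoprime_comm]
      exact (Nat.prime_iff_prime_int.1 hp).coprime_iff_not_dvd.2 hd
    obtain ⟨s, t, hst⟩ := hcop
    have hx0' : ∃ z ∈ K, M • x0 - p • z ∈ K0 := by
      refine ⟨s • v + t • (M • x0), K.add_mem (K.zsmul_mem hv s) (K.zsmul_mem (hEK x0 hx0) t), ?_⟩
      have : M • x0 - p • (s • v + t • (M • x0)) = s • u := by
        have e1 : M • x0 = s • (d • (M • x0)) + t • ((p : ℤ) • (M • x0)) := by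
          rw [← mul_zsmul', ← mul_zsmul', ← add_zsmul]
          have : d * s + (p : ℤ) * t = 1 := by rw [← hst]; ring
          simp only [mul_comm] at this ⊢
          first
            | rw [this, one_zsmul]
            | (rw [show s * d + t * (p : ℤ) = 1 from hst, one_zsmul])
        nth_rewrite 1 [e1]
        rw [heq, natCast_zsmul]
        simp only [smul_add, smul_comm p]
        abel
      rw [this]
      exact K0.zsmul_mem hu s
    have hstep : ∀ y ∈ K, ∃ z ∈ K, y - p • z ∈ K0 := by
      rintro y ⟨w, hw, rfl⟩
      induction hw using AddSubgroup.closure_induction with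
      | mem x hx =>
        by_cases hxx : x = x0
        · rw [hxx]; exact hx0'
        · refine ⟨0, K.zero_mem, ?_⟩
          rw [smul_zero, sub_zero]
          exact ⟨x, AddSubgroup.subset_closure ⟨hx, hxx⟩, rfl⟩
      | zero => exact ⟨0, K.zero_mem, by simp⟩
      | add x y _ _ hx hy =>
        obtain ⟨z1, h1, h1'⟩ := hx
        obtain ⟨z2, h2, h2'⟩ := hy
        refine ⟨z1 + z2, K.add_mem h1 h2, ?_⟩
        have := K0.add_mem h1' h2'
        have e : mu (x + y) - p • (z1 + z2) = (mu x - p • z1) + (mu y - p • z2) := by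
          rw [AddMonoidHom.map_add, smul_add]
          abel
        rw [e]
        exact this
      | neg x _ hx =>
        obtain ⟨z1, h1, h1'⟩ := hx
        refine ⟨-z1, K.neg_mem h1, ?_⟩
        have := K0.neg_mem h1'
        have e : mu (-x) - p • (-z1) = -(mu x - p • z1) := by
          rw [AddMonoidHom.map_neg, smul_neg]
          abel
        rw [e]
        exact this
    have hiter : ∀ i : ℕ, ∀ y ∈ K, ∃ z ∈ K, y - p ^ i • z ∈ K0 := by
      intro i
      induction i with
      | zero => intro y hy; exact ⟨y, hy, by simp⟩
      | succ i ih =>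
        intro y hy
        obtain ⟨z, hz, hz'⟩ := ih y hy
        obtain ⟨w, hw, hw'⟩ := hstep z hz
        refine ⟨w, hw, ?_⟩
        have := K0.add_mem hz' (K0.nsmul_mem hw' (p ^ i))
        have e : y - p ^ (i + 1) • w = y - p ^ i • z + p ^ i • (z - p • w) := by
          rw [pow_succ, mul_nsmul', smul_sub]
          abel
        rw [e]
        exact this
    obtain ⟨z, hz, hz'⟩ := hiter a (M • g) ⟨g, hgen, rfl⟩
    rw [hkill z hz, sub_zero] at hz'
    obtain ⟨w, hw, hw'⟩ := hz'
    refine hM (hdiv x0 hx0 M ?_)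
    rw [← hw', hmu]
    exact AddSubgroup.nsmul_mem _ hw M
  -- counting
  let f : K →+ K := nsmulAddMonoidHom p
  have hfv : ∀ y : K, ((f y : K) : G) = p • (y : G) := fun y => rfl
  have hker : Nat.card f.ker ≤ Nat.card (nsmulAddMonoidHom (α := G) p).ker := by
    apply Nat.card_le_card_of_injective
      (fun y : f.ker => (⟨((y : K) : G), by
        have h1 := y.2
        rw [AddMonoidHom.mem_ker] at h1 ⊢
        have := congrArg Subtype.val h1
        exact this⟩ : (nsmulAddMonoidHom (α := G) p).ker))
    intro y z hyz
    have := congrArg Subtype.val hyz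
    exact Subtype.ext (Subtype.ext this)
  have hK : Nat.card f.ker * Nat.card f.range = Nat.card K := by
    rw [← AddSubgroup.index_ker, AddSubgroup.card_mul_index]
  have hinj : Nat.card ((E → Fin p) × f.range) ≤ Nat.card K := by
    apply Nat.card_le_card_of_injective
      (fun c => (∑ x : E, (c.1 x : ℕ) • (⟨M • (x : G), hEK x x.2⟩ : K)) + (c.2 : K))
    rintro ⟨c, y⟩ ⟨c', y'⟩ h
    have hG := congrArg (Subtype.val) h
    simp only [AddSubgroup.coe_add, AddSubgroup.val_finsetSum, AddSubgroup.coe_nsmul] at hG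
    have hcc : c = c' := by
      by_contra hne
      obtain ⟨x0, hx0⟩ := Function.ne_iff.1 hne
      obtain ⟨z, hz⟩ := y.2
      obtain ⟨z', hz'⟩ := y'.2
      have hzG : ((y : K) : G) = p • (z : G) := by rw [← hz]; rfl
      have hzG' : ((y' : K) : G) = p • (z' : G) := by rw [← hz']; rfl
      refine hind x0 x0.2 ((c x0 : ℕ) - (c' x0 : ℕ) : ℤ) ?_
        (∑ x ∈ Finset.univ.erase x0, (((c' x : ℕ) : ℤ) - (c x : ℕ)) • (M • (x : G))) ?_
        ((z' : G) - z) (K.sub_mem z'.2 z.2) ?_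
      · intro hd
        apply hx0
        have h1 := (c x0).2
        have h2 := (c' x0).2
        have h3 := Int.eq_zero_of_abs_lt_dvd hd (by rw [abs_lt]; constructor <;> omega)
        apply Fin.ext
        omega
      · apply AddSubgroup.sum_mem
        intro x hx
        apply AddSubgroup.zsmul_mem
        refine ⟨x, AddSubgroup.subset_closure ⟨x.2, ?_⟩, rfl⟩
        intro hxx
        exact (Finset.mem_erase.1 hx).1 (Subtype.ext hxx)
      · rw [← Finset.add_sum_erase _ _ (Finset.mem_univ x0),
          ← Finset.add_sum_erase (a := x0) _ (fun x : E => (c' x : ℕ) • (M • (x : G)))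
            (Finset.mem_univ x0), hzG, hzG'] at hG
        simp only [sub_smul, natCast_zsmul, Finset.sum_sub_distrib, smul_sub]
        rw [sub_eq_iff_eq_add]
        rw [← sub_eq_zero] at hG ⊢
        rw [← hG]
        abel
    subst hcc
    have : y = y' := by
      have := add_left_cancel h
      exact Subtype.ext this
    rw [this]
  rw [Nat.card_prod, Nat.card_fun, Nat.card_eq_fintype_card (α := Fin p), Fintype.card_fin,
    ← hK] at hinj
  have hpos : 0 < Nat.card f.range := Nat.card_pos
  have h1 := Nat.le_of_mul_le_mul_right hinj hpos
  apply aux_torsion_le p hp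
  refine le_trans ?_ (h1.trans hker)
  simp

end AuxD

section AuxE
variable {G : Type*} [AddCommGroup G]

lemma aux_nonfull [Fintype G] [DecidableEq G] {G₀ : Set G} (hmin : IsMinNonHalfFactorial G₀)
    {U : Multiset G} (hU : IsAtomSeq G₀ U) {x : G} (hx : x ∈ G₀) (hxU : x ∉ U) :
    crossNumber U = 1 := by
  have h1 : G₀ \ {x} ⊂ G₀ := by
    refine ⟨Set.sdiff_subset, fun h => ?_⟩
    exact (h hx).2 rfl
  refine aux_hf_cr (hmin.2 _ h1) (aux_atom_mono h1.1 hU ?_)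
  intro y hy
  refine ⟨hU.1.1 y hy, ?_⟩
  rintro rfl
  exact hxU hy

lemma aux_exists_big {G₀ : Set G} (hmin : IsMinNonHalfFactorial G₀)
    (hL : IsLCNSet G₀) : ∃ U, IsAtomSeq G₀ U ∧ 1 < crossNumber U := by
  by_contra hno
  push Not at hno
  have hall : ∀ U, IsAtomSeq G₀ U → crossNumber U = 1 := fun U hU =>
    le_antisymm (hno U hU) (hL U hU)
  obtain ⟨d, B, _, _, x, ⟨l, hl, h1, h2⟩, y, ⟨l', hl', h1', h2'⟩, hxy, _⟩ := hmin.1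
  have e1 := aux_cr_eq_len l (fun A hA => hall A (h1 A hA))
  have e2 := aux_cr_eq_len l' (fun A hA => hall A (h1' A hA))
  rw [h2] at e1
  rw [h2', e1] at e2
  have e3 : Multiset.card l = Multiset.card l' := by exact_mod_cast e2
  omega

/-- The product of the full powers of the elements of `S`. -/
noncomputable def auxR (S : Finset G) : Multiset G :=
  ∑ x ∈ S, Multiset.replicate (addOrderOf x) x

lemma aux_R_count [DecidableEq G] (S : Finset G) (y : G) :
    (auxR S).count y = if y ∈ S then addOrderOf y else 0 := by
  unfold auxR
  rw [Multiset.count_sum']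
  simp [Multiset.count_replicate]

lemma aux_R_len [Finite G] (S : Finset G) : S.card ∈ LengthSet (S : Set G) (auxR S) := by
  have := aux_len_finset (G₀ := (S : Set G)) S
    (fun x => Multiset.replicate (addOrderOf x) x) (fun _ => 1)
    (fun x hx => aux_len_atom (aux_atom_replicate hx))
  simpa [auxR] using this

lemma aux_R_cr [Finite G] (S : Finset G) : crossNumber (auxR S) = S.card := by
  have := aux_cr_eq_len (S.val.map (fun x => Multiset.replicate (addOrderOf x) x)) (by
    intro A hA
    obtain ⟨x, _, rfl⟩ := Multiset.mem_map.1 hA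
    exact aux_cr_elem x)
  rw [Multiset.card_map] at this
  exact this

lemma aux_R_zs [Finite G] (S : Finset G) : IsZeroSumSeq (S : Set G) (auxR S) := by
  obtain ⟨l, _, h1, h2⟩ := aux_R_len S
  rw [← h2]
  exact aux_zs_sum h1

lemma aux_le_R [Finite G] [DecidableEq G] {S : Finset G} {U : Multiset G}
    (hU : IsAtomSeq (S : Set G) U) (h1 : 1 < crossNumber U) : U ≤ auxR S := by
  rw [Multiset.le_iff_count]
  intro y
  rw [aux_R_count]
  split_ifs with hy
  · by_contra hlt
    push Not at hlt
    have hle : Multiset.replicate (addOrderOf y) y ≤ U :=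
      Multiset.le_count_iff_replicate_le.1 hlt.le
    have hat := aux_atom_replicate (G₀ := (S : Set G)) hy
    have := aux_atom_le hU hat.1 hat.2.1 hle
    rw [← this, aux_cr_elem] at h1
    exact lt_irrefl _ h1
  · have : y ∉ U := fun h => hy (hU.1.1 y h)
    rw [Multiset.count_eq_zero.2 this]

lemma aux_len_co [Finite G] [DecidableEq G] {S : Finset G} (hL : IsLCNSet (S : Set G))
    {U C : Multiset G}
    (hU : IsAtomSeq (S : Set G) U) (h1 : 1 < crossNumber U) (hC : U + C = auxR S) {l : ℕ}
    (hl : l ∈ LengthSet (S : Set G) C) : sInf (DeltaSet (S : Set G)) + (1 + l) ≤ S.card := by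
  have h2 : 1 + l ∈ LengthSet (S : Set G) (auxR S) := by
    rw [← hC]
    exact aux_len_add (aux_len_atom hU) hl
  refine aux_sInf_le h2 (aux_R_len S) ?_
  obtain ⟨L, hL1, hL2, hL3⟩ := hl
  have h3 := aux_cr_ge_len hL L hL2
  rw [hL3, hL1] at h3
  have h4 := aux_R_cr S
  rw [← hC, aux_cr_add] at h4
  have : ((1 + l : ℕ) : ℚ) < S.card := by
    push_cast
    linarith
  exact_mod_cast this

lemma aux_card_ge [Finite G] [DecidableEq G] {S : Finset G}
    (hmin : IsMinNonHalfFactorial (S : Set G)) (hL : IsLCNSet (S : Set G)) :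
    sInf (DeltaSet (S : Set G)) + 2 ≤ S.card := by
  obtain ⟨U, hU, h1⟩ := aux_exists_big hmin hL
  obtain ⟨C, hC⟩ := Multiset.le_iff_exists_add.1 (aux_le_R hU h1)
  have hCz : IsZeroSumSeq (S : Set G) C := by
    have h := aux_R_zs S
    rw [hC] at h
    exact aux_zs_sub hU.1 h
  obtain ⟨L, hL1, hL2⟩ := aux_exists_fact C hCz
  have h2 := aux_len_co hL hU h1 hC.symm ⟨L, rfl, hL1, hL2⟩
  have h3 : Multiset.card L ≠ 0 := by
    intro h0
    rw [Multiset.card_eq_zero] at h0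
    rw [h0, Multiset.sum_zero] at hL2
    rw [← hL2, add_zero] at hC
    obtain ⟨x, hx⟩ := Multiset.exists_mem_of_ne_zero hU.2.1
    have hxS : x ∈ S := hU.1.1 x hx
    have hat := aux_atom_replicate (G₀ := (S : Set G)) (x := x) hxS
    have hle : Multiset.replicate (addOrderOf x) x ≤ U := by
      apply Multiset.le_count_iff_replicate_le.1
      rw [← hC, aux_R_count, if_pos hxS]
    have := aux_atom_le hU hat.1 hat.2.1 hle
    rw [← this, aux_cr_elem] at h1
    exact lt_irrefl _ h1
  omega

lemma aux_full_big [Fintype G] [DecidableEq G] {S : Finset G}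
    (hmin : IsMinNonHalfFactorial (S : Set G)) (hL : IsLCNSet (S : Set G))
    (hmax : sInf (DeltaSet (S : Set G)) = sSup (DeltaStar G))
    {U : Multiset G} (hU : IsAtomSeq (S : Set G) U) (hf : ∀ x ∈ S, x ∈ U) :
    1 < crossNumber U := by
  by_contra hno
  have hcr : crossNumber U = 1 := le_antisymm (not_lt.1 hno) (hL U hU)
  set m := sSup (DeltaStar G) + 2 with hm
  have hmS : m ≤ S.card := by
    have := aux_card_ge hmin hL
    omega
  have hmpos : (0 : ℚ) < m := by
    have : 0 < m := by omega
    exact_mod_cast this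
  have h1 : (Multiset.card U : ℚ) * (m : ℚ)⁻¹ ≤ crossNumber U := by
    unfold crossNumber
    have := Multiset.card_nsmul_le_sum (s := U.map fun g => ((addOrderOf g : ℚ))⁻¹)
      (a := (m : ℚ)⁻¹) (by
        intro x hx
        obtain ⟨y, _, rfl⟩ := Multiset.mem_map.1 hx
        have hy := addOrderOf_pos y
        have hy2 := aux_order_le y
        have a1 : (0 : ℚ) < addOrderOf y := by exact_mod_cast hy
        have a2 : (addOrderOf y : ℚ) ≤ m := by exact_mod_cast hy2
        exact inv_anti₀ a1 a2)
    rw [Multiset.card_map, nsmul_eq_mul] at this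
    exact this
  rw [hcr, ← div_eq_mul_inv, div_le_one hmpos] at h1
  have h2 : Multiset.card U ≤ m := by exact_mod_cast h1
  have hS : ∀ W : Multiset G, (∀ x ∈ S, x ∈ W) → S.val ≤ W := fun W hW =>
    (Multiset.le_iff_subset S.nodup).2 (fun x hx => hW x hx)
  have hSU : S.val = U := Multiset.eq_of_le_of_card_le (hS U hf) (h2.trans hmS)
  obtain ⟨W, hW, hW1⟩ := aux_exists_big hmin hL
  have hWf : ∀ x ∈ S, x ∈ W := by
    intro x hx
    by_contra hxW
    rw [aux_nonfull hmin hW hx hxW] at hW1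
    exact lt_irrefl _ hW1
  have hle := hS W hWf
  rw [hSU] at hle
  have := aux_atom_le hW hU.1 hU.2.1 hle
  rw [← this] at hW1
  exact hno hW1

/-- `j • g` is the `g`-part of a product of non-full atoms. -/
def auxInH [DecidableEq G] (S : Finset G) (g : G) (j : ℕ) : Prop :=
  ∃ Q : Multiset (Multiset G), (∀ A ∈ Q, IsAtomSeq (S : Set G) A ∧ ∃ x ∈ S, x ∉ A) ∧
    (Q.sum.count g) • g = j • g

lemma aux_inH_zero [DecidableEq G] (S : Finset G) (g : G) : auxInH S g 0 :=
  ⟨0, by simp, by simp⟩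

lemma aux_inH_add [DecidableEq G] {S : Finset G} {g : G} {a b : ℕ} (ha : auxInH S g a)
    (hb : auxInH S g b) : auxInH S g (a + b) := by
  obtain ⟨Q, h1, h2⟩ := ha
  obtain ⟨Q', h1', h2'⟩ := hb
  refine ⟨Q + Q', ?_, ?_⟩
  · intro A hA
    rcases Multiset.mem_add.1 hA with h | h
    · exact h1 A h
    · exact h1' A h
  · rw [Multiset.sum_add, Multiset.count_add, add_nsmul, add_nsmul, h2, h2']

lemma aux_inH_mul [DecidableEq G] {S : Finset G} {g : G} {a : ℕ} (ha : auxInH S g a) (m : ℕ) :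
    auxInH S g (m * a) := by
  induction m with
  | zero => simpa using aux_inH_zero S g
  | succ m ih => rw [Nat.succ_mul]; exact aux_inH_add ih ha

lemma aux_inH_sub [Finite G] [DecidableEq G] {S : Finset G} {g : G} {a b : ℕ}
    (ha : auxInH S g (a + b)) (hb : auxInH S g b) : auxInH S g a := by
  obtain ⟨Q, h1, h2⟩ := aux_inH_add ha (aux_inH_mul hb (addOrderOf g - 1))
  refine ⟨Q, h1, ?_⟩
  rw [h2]
  have e : a + b + (addOrderOf g - 1) * b = a + b * addOrderOf g := by
    obtain ⟨n, hn⟩ := Nat.exists_eq_succ_of_ne_zero (addOrderOf_pos g).ne'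
    rw [hn]
    simp only [Nat.succ_eq_add_one, Nat.add_sub_cancel]
    ring
  rw [e, add_nsmul, mul_nsmul', addOrderOf_nsmul_eq_zero, smul_zero, add_zero]

lemma aux_inH_order [DecidableEq G] (S : Finset G) (g : G) : auxInH S g (addOrderOf g) :=
  ⟨0, by simp, by simp [addOrderOf_nsmul_eq_zero]⟩

lemma aux_inH_dvd [Finite G] [DecidableEq G] {S : Finset G} {g : G} {h : ℕ} (hpos : 0 < h)
    (hh : auxInH S g h) (hleast : ∀ m, 0 < m → auxInH S g m → h ≤ m) {j : ℕ}
    (hj : auxInH S g j) : h ∣ j := by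
  have h1 : auxInH S g (j % h) := by
    apply aux_inH_sub (b := (j / h) * h) _ (aux_inH_mul hh _)
    rw [mul_comm, Nat.mod_add_div]
    exact hj
  by_contra hnd
  have h2 : 0 < j % h := Nat.pos_of_ne_zero fun h0 => hnd (Nat.dvd_of_mod_eq_zero h0)
  have := hleast _ h2 h1
  have := Nat.mod_lt j hpos
  omega

lemma aux_closure_multiset [Fintype G] {E : Set G} {y : G} (hy : y ∈ AddSubgroup.closure E) :
    ∃ T : Multiset G, (∀ x ∈ T, x ∈ E) ∧ T.sum = y := by
  induction hy using AddSubgroup.closure_induction with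
  | mem x hx => exact ⟨{x}, by simpa using hx, by simp⟩
  | zero => exact ⟨0, by simp, by simp⟩
  | add x y _ _ hx hy =>
    obtain ⟨T, h1, h2⟩ := hx
    obtain ⟨T', h1', h2'⟩ := hy
    refine ⟨T + T', ?_, by rw [Multiset.sum_add, h2, h2']⟩
    intro z hz
    rcases Multiset.mem_add.1 hz with h | h
    · exact h1 z h
    · exact h1' z h
  | neg x _ hx =>
    obtain ⟨T, h1, h2⟩ := hx
    refine ⟨(addOrderOf x - 1) • T, fun z hz => h1 z (Multiset.mem_of_mem_nsmul hz), ?_⟩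
    rw [Multiset.sum_nsmul, h2]
    apply eq_neg_of_add_eq_zero_left
    rw [← succ_nsmul, Nat.sub_add_cancel (addOrderOf_pos x), addOrderOf_nsmul_eq_zero]

lemma aux_inH_closure [Fintype G] [DecidableEq G] {S : Finset G} {g : G} (hg : g ∈ S) {x : G}
    (hx : x ∈ S) (hxg : x ≠ g) {j : ℕ}
    (hj : j • g ∈ AddSubgroup.closure (((S : Set G) \ {g}) \ {x})) : auxInH S g j := by
  obtain ⟨T, hT, hTs⟩ := aux_closure_multiset (AddSubgroup.neg_mem _ hj)
  have hz : IsZeroSumSeq (S : Set G) (Multiset.replicate j g + T) := by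
    refine ⟨?_, by rw [Multiset.sum_add, hTs]; simp⟩
    intro y hy
    rcases Multiset.mem_add.1 hy with h | h
    · rw [Multiset.eq_of_mem_replicate h]; exact hg
    · exact (hT y h).1.1
  obtain ⟨l, h1, h2⟩ := aux_exists_fact _ hz
  refine ⟨l, fun A hA => ⟨h1 A hA, x, hx, fun hxA => ?_⟩, ?_⟩
  · have h3 := Multiset.mem_of_le (Multiset.le_sum_of_mem hA) hxA
    rw [h2] at h3
    rcases Multiset.mem_add.1 h3 with h | h
    · exact hxg (Multiset.eq_of_mem_replicate h)
    · exact (hT x h).2 rfl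
  · have h4 : T.count g = 0 := Multiset.count_eq_zero.2 fun h => (hT g h).1.2 rfl
    rw [h2, Multiset.count_add, h4, Multiset.count_replicate_self, add_zero]

lemma aux_pigeon {α : Type*} (n : ℕ) (hn : 0 < n) (f : α → ℕ) (Q : Multiset α)
    (h : n ≤ Multiset.card Q) :
    ∃ Q1 Q2 : Multiset α, Q = Q1 + Q2 ∧ Q1 ≠ 0 ∧ n ∣ (Q1.map f).sum := by
  induction Q using Quotient.inductionOn with
  | h L =>
  have hL : n ≤ L.length := by simpa using h
  obtain ⟨i, hi, i', hi', hne, heq⟩ := Finset.exists_ne_map_eq_of_card_lt_of_maps_to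
    (s := Finset.range (n + 1)) (t := Finset.range n)
    (f := fun i => ((L.take i).map f).sum % n) (by simp) (by
      intro i _
      simp [Nat.mod_lt _ hn])
  wlog hlt : i < i' generalizing i i'
  · exact this i' hi' i hi hne.symm heq.symm (by omega)
  have hi2 : i' ≤ n := by
    have := Finset.mem_range.1 hi'
    omega
  have e1 : L.take i ++ (L.take i').drop i = L.take i' := by
    have := List.take_append_drop i (L.take i')
    rwa [List.take_take, min_eq_left hlt.le] at this
  have e2 : L.take i ++ (L.take i').drop i ++ L.drop i' = L := by
    rw [e1, List.take_append_drop]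
  refine ⟨((L.take i').drop i : List α), (L.take i ++ L.drop i' : List α), ?_, ?_, ?_⟩
  · change (L : Multiset α) = _
    nth_rewrite 1 [← e2]
    rw [← Multiset.coe_add, ← Multiset.coe_add, ← Multiset.coe_add]
    abel
  · intro h0
    have := congrArg Multiset.card h0
    simp at this
    omega
  · rw [Multiset.map_coe, Multiset.sum_coe]
    rw [← e1, List.map_append, List.sum_append] at heq
    have h5 : ((L.take i).map f).sum + 0 ≡
        ((L.take i).map f).sum + (((L.take i').drop i).map f).sum [MOD n] := by
      simpa [Nat.ModEq] using heq
    exact (Nat.modEq_zero_iff_dvd.1 (Nat.ModEq.add_left_cancel' _ h5).symm)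

lemma aux_count_sum [DecidableEq G] (Q : Multiset (Multiset G)) (g : G) :
    Q.sum.count g = (Q.map (Multiset.count g)).sum := by
  induction Q using Multiset.induction_on with
  | empty => simp
  | cons a s ih => simp [ih]

end AuxE

section AuxF
variable {G : Type*} [AddCommGroup G]

lemma aux_inH_min [Finite G] [DecidableEq G] {S : Finset G} {g : G} {j : ℕ}
    (hj : auxInH S g j) :
    ∃ Q : Multiset (Multiset G), (∀ A ∈ Q, IsAtomSeq (S : Set G) A ∧ ∃ x ∈ S, x ∉ A) ∧
      (Q.sum.count g) • g = j • g ∧ Multiset.card Q < addOrderOf g := by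
  obtain ⟨Q, h1, h2⟩ := hj
  induction hN : Multiset.card Q using Nat.strong_induction_on generalizing Q with
  | _ N ih =>
  by_cases hlt : Multiset.card Q < addOrderOf g
  · exact ⟨Q, h1, h2, hlt⟩
  obtain ⟨Q1, Q2, hQ, hQ1, hd⟩ := aux_pigeon (addOrderOf g) (addOrderOf_pos g)
    (Multiset.count g) Q (not_lt.1 hlt)
  have hpos : 0 < Multiset.card Q1 := Multiset.card_pos.2 hQ1
  have hc : Multiset.card Q = Multiset.card Q1 + Multiset.card Q2 := by
    rw [hQ, Multiset.card_add]
  refine ih (Multiset.card Q2) (by omega) Q2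
    (fun A hA => h1 A (by rw [hQ]; exact Multiset.mem_add.2 (Or.inr hA))) ?_ rfl
  rw [← h2, hQ, Multiset.sum_add, Multiset.count_add, add_nsmul]
  rw [← aux_count_sum] at hd
  rw [addOrderOf_dvd_iff_nsmul_eq_zero.1 hd, zero_add]

lemma aux_stepB [Fintype G] [DecidableEq G] {S : Finset G}
    (hmin : IsMinNonHalfFactorial (S : Set G)) (hL : IsLCNSet (S : Set G))
    (hmax : sInf (DeltaSet (S : Set G)) = sSup (DeltaStar G)) {g : G} (hg : g ∈ S)
    {k : ℕ} (hk1 : 1 ≤ k)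
    (hk : ∀ x ∈ S, x ≠ g → k • g ∉ AddSubgroup.closure (((S : Set G) \ {g}) \ {x})) :
    ¬ auxInH S g k := by
  classical
  intro hH
  have hex : ∃ h, 0 < h ∧ auxInH S g h := ⟨k, hk1, hH⟩
  obtain ⟨h, hpos, hh, hleast⟩ : ∃ h, 0 < h ∧ auxInH S g h ∧
      ∀ m, 0 < m → auxInH S g m → h ≤ m :=
    ⟨Nat.find hex, (Nat.find_spec hex).1, (Nat.find_spec hex).2,
      fun m hm hm' => Nat.find_min' hex ⟨hm, hm'⟩⟩
  have hkh : ∀ x ∈ S, x ≠ g → h • g ∉ AddSubgroup.closure (((S : Set G) \ {g}) \ {x}) := by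
    intro x hx hxg hmem
    apply hk x hx hxg
    obtain ⟨c, rfl⟩ := aux_inH_dvd hpos hh hleast hH
    rw [mul_nsmul]
    exact AddSubgroup.nsmul_mem _ hmem c
  have hcardS := aux_card_ge hmin hL
  have hnpos := addOrderOf_pos g
  have hle : h ≤ addOrderOf g := hleast _ hnpos (aux_inH_order S g)
  have hlt : h < addOrderOf g := by
    refine lt_of_le_of_ne hle fun heq => ?_
    obtain ⟨x, hx, hxg⟩ := Finset.exists_mem_ne (show 1 < S.card by omega) g
    apply hkh x hx hxg
    rw [heq, addOrderOf_nsmul_eq_zero]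
    exact AddSubgroup.zero_mem _
  obtain ⟨Q, hQ, hQc, hQn⟩ := aux_inH_min hh
  have hord := aux_order_le g
  set n := addOrderOf g with hn
  set P := Q.sum with hP
  have hPz : IsZeroSumSeq (S : Set G) P := aux_zs_sum fun A hA => (hQ A hA).1
  have hmod : P.count g ≡ h [MOD n] := nsmul_eq_nsmul_iff_modEq.1 hQc
  set y := P.count g / n with hy
  have hcount : P.count g = y * n + h := by
    have h1 : P.count g % n = h := by
      have := hmod
      unfold Nat.ModEq at this
      rw [Nat.mod_eq_of_lt hlt] at this
      exact this
    have h2 := Nat.div_add_mod (P.count g) n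
    rw [h1, mul_comm] at h2
    exact h2.symm
  have hat := aux_atom_replicate (G₀ := (S : Set G)) (x := g) hg
  have hleP : y • Multiset.replicate n g ≤ P := by
    rw [Multiset.nsmul_replicate]
    apply Multiset.le_count_iff_replicate_le.1
    omega
  obtain ⟨P', hP'⟩ := Multiset.le_iff_exists_add.1 hleP
  have hylen : y * 1 ∈ LengthSet (S : Set G) (y • Multiset.replicate n g) :=
    aux_len_nsmul (aux_len_atom hat) y
  have hyz : IsZeroSumSeq (S : Set G) (y • Multiset.replicate n g) := by
    obtain ⟨l, _, a1, a2⟩ := hylen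
    rw [← a2]
    exact aux_zs_sum a1
  have hP'z : IsZeroSumSeq (S : Set G) P' := by
    rw [hP'] at hPz
    exact aux_zs_sub hyz hPz
  have hP'c : P'.count g = h := by
    have := congrArg (Multiset.count g) hP'
    rw [Multiset.count_add, Multiset.nsmul_replicate, Multiset.count_replicate_self] at this
    omega
  obtain ⟨l, hl1, hl2⟩ := aux_exists_fact P' hP'z
  by_cases hfull : ∃ A ∈ l, ∀ x ∈ S, x ∈ A
  · obtain ⟨A, hA, hAf⟩ := hfull
    have hAbig := aux_full_big hmin hL hmax (hl1 A hA) hAf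
    have c1 := aux_cr_gt_len hL l hl1 hA hAbig
    have c2 : crossNumber P = Multiset.card Q := aux_cr_eq_len Q fun A hA => by
      obtain ⟨h1, x, hx, hxA⟩ := hQ A hA
      exact aux_nonfull hmin h1 hx hxA
    have c3 : crossNumber (y • Multiset.replicate n g) = y := by
      have := aux_cr_eq_len (Multiset.replicate y (Multiset.replicate n g)) (by
        intro B hB
        rw [Multiset.eq_of_mem_replicate hB]
        exact aux_cr_elem g)
      rw [Multiset.sum_replicate, Multiset.card_replicate] at this
      exact this
    have c4 : crossNumber P = y + crossNumber P' := by
      rw [hP', aux_cr_add, c3]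
    rw [hl2] at c1
    have c5 : y * 1 + Multiset.card l < Multiset.card Q := by
      have : ((y * 1 + Multiset.card l : ℕ) : ℚ) < Multiset.card Q := by
        push_cast
        linarith
      exact_mod_cast this
    have l1 : y * 1 + Multiset.card l ∈ LengthSet (S : Set G) P := by
      rw [hP']
      exact aux_len_add hylen ⟨l, rfl, hl1, hl2⟩
    have l2 : Multiset.card Q ∈ LengthSet (S : Set G) P :=
      ⟨Q, rfl, fun A hA => (hQ A hA).1, rfl⟩
    have l3 := aux_sInf_le l1 l2 c5
    have l4 : 0 < Multiset.card l := Multiset.card_pos.2 (fun h0 => by simp [h0] at hA)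
    have hy0 : y = 0 := by omega
    have hl0 : Multiset.card l = 1 := by omega
    obtain ⟨A', rfl⟩ := Multiset.card_eq_one.1 hl0
    rw [Multiset.mem_singleton] at hA
    subst hA
    rw [Multiset.sum_singleton] at hl2
    have hPA : P = A := by rw [hP', hy0, zero_nsmul, zero_add, hl2]
    obtain ⟨U, hU⟩ : ∃ U, U ∈ Q := by
      apply Multiset.exists_mem_of_ne_zero
      rintro rfl
      simp at c5
    have hUle : U ≤ P := Multiset.le_sum_of_mem hU
    obtain ⟨hUa, x, hx, hxU⟩ := hQ U hU
    rw [hPA] at hUle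
    have := aux_atom_le (hl1 A (by simp)) hUa.1 hUa.2.1 hUle
    rw [this] at hxU
    exact hxU (hAf x hx)
  · push Not at hfull
    have hsum : (l.map (Multiset.count g)).sum = h := by
      rw [← aux_count_sum, hl2, hP'c]
    obtain ⟨A, hA, hA0⟩ : ∃ A ∈ l, A.count g ≠ 0 := by
      by_contra hno
      push Not at hno
      have : (l.map (Multiset.count g)).sum = 0 := by
        apply Multiset.sum_eq_zero
        intro z hz
        obtain ⟨B, hB, rfl⟩ := Multiset.mem_map.1 hz
        exact hno B hB
      omega
    obtain ⟨x, hx, hxA⟩ := hfull A hA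
    have hin : auxInH S g (A.count g) :=
      ⟨{A}, by simpa using ⟨hl1 A hA, x, hx, hxA⟩, by simp⟩
    have g1 := hleast _ (Nat.pos_of_ne_zero hA0) hin
    have g2 : A.count g ≤ P'.count g := by
      apply Multiset.count_le_of_le
      rw [← hl2]
      exact Multiset.le_sum_of_mem hA
    have g3 : A.count g = h := by omega
    have hxg : x ≠ g := by
      rintro rfl
      exact hA0 (Multiset.count_eq_zero.2 hxA)
    apply hkh x hx hxg
    have hle2 : Multiset.replicate h g ≤ A := Multiset.le_count_iff_replicate_le.1 g3.ge
    obtain ⟨A', hA'⟩ := Multiset.le_iff_exists_add.1 hle2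
    have hs := (hl1 A hA).1.2
    rw [hA', Multiset.sum_add, Multiset.sum_replicate] at hs
    rw [eq_neg_of_add_eq_zero_left hs]
    apply AddSubgroup.neg_mem
    apply AddSubgroup.multiset_sum_mem
    intro z hz
    have hzA : z ∈ A := by rw [hA']; exact Multiset.mem_add.2 (Or.inr hz)
    apply AddSubgroup.subset_closure
    refine ⟨⟨(hl1 A hA).1.1 z hzA, ?_⟩, ?_⟩
    · rintro rfl
      have := congrArg (Multiset.count z) hA'
      rw [Multiset.count_add, Multiset.count_replicate_self, g3] at this
      have h0 := Multiset.count_pos.2 hz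
      omega
    · rintro rfl
      exact hxA hzA

lemma aux_stepC [Fintype G] [DecidableEq G] {S : Finset G} {g : G} (hg : g ∈ S)
    (hgen : g ∈ AddSubgroup.closure ((S : Set G) \ {g})) {k : ℕ}
    (hk : ¬ auxInH S g k) : S.card ≤ sSup (DeltaStar G) + 2 := by
  classical
  have hex : ∃ h, 0 < h ∧ auxInH S g h := ⟨addOrderOf g, addOrderOf_pos g, aux_inH_order S g⟩
  obtain ⟨h, hpos, hh, hleast⟩ : ∃ h, 0 < h ∧ auxInH S g h ∧
      ∀ m, 0 < m → auxInH S g m → h ≤ m :=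
    ⟨Nat.find hex, (Nat.find_spec hex).1, (Nat.find_spec hex).2,
      fun m hm hm' => Nat.find_min' hex ⟨hm, hm'⟩⟩
  have h1 : h ≠ 1 := by
    rintro rfl
    apply hk
    have := aux_inH_mul hh k
    rwa [mul_one] at this
  have hc : ((S.erase g : Finset G) : Set G) = (S : Set G) \ {g} := Finset.coe_erase g S
  have := aux_rank_le h.minFac (Nat.minFac_prime h1) (S.erase g) g (by rw [hc]; exact hgen) (by
    intro x hx j hj
    rw [hc] at hj
    rw [Finset.mem_erase] at hx
    exact (Nat.minFac_dvd h).trans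
      (aux_inH_dvd hpos hh hleast (aux_inH_closure hg hx.2 hx.1 hj)))
  rw [Finset.card_erase_of_mem hg] at this
  omega

lemma aux_main [Fintype G] [DecidableEq G] {S : Finset G}
    (hmin : IsMinNonHalfFactorial (S : Set G)) (hL : IsLCNSet (S : Set G))
    (hmax : sInf (DeltaSet (S : Set G)) = sSup (DeltaStar G)) {g : G} (hg : g ∈ S)
    (hgen : g ∈ AddSubgroup.closure ((S : Set G) \ {g}))
    {k : ℕ} (hk1 : 1 ≤ k) (hk2 : k ≤ addOrderOf g)
    (hk : ∀ x ∈ S, x ≠ g → k • g ∉ AddSubgroup.closure (((S : Set G) \ {g}) \ {x})) :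
    ∃ A : Multiset G, IsAtomSeq (S : Set G) A ∧ A.count g = k ∧ 1 < crossNumber A := by
  have hH := aux_stepB hmin hL hmax hg hk1 hk
  have hcard := aux_stepC hg hgen hH
  have hlt : k < addOrderOf g := by
    refine lt_of_le_of_ne hk2 fun heq => hH ?_
    rw [heq]
    exact aux_inH_order S g
  obtain ⟨T0, hT0, hT0s⟩ := aux_closure_multiset
    (AddSubgroup.neg_mem _ (AddSubgroup.nsmul_mem _ hgen k))
  obtain ⟨T, hT, hTs, hTc⟩ : ∃ T : Multiset G, (∀ x ∈ T, x ∈ (S : Set G) \ {g}) ∧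
      T.sum = -(k • g) ∧ ∀ x, T.count x < addOrderOf x := by
    have hcnt : ∀ y : G, (∑ x : G, Multiset.replicate (T0.count x % addOrderOf x) x).count y =
        T0.count y % addOrderOf y := by
      intro y
      rw [Multiset.count_sum']
      simp [Multiset.count_replicate]
    refine ⟨∑ x : G, Multiset.replicate (T0.count x % addOrderOf x) x, ?_, ?_, ?_⟩
    · intro y hy
      apply hT0
      have h1 := Multiset.count_pos.2 hy
      rw [hcnt] at h1
      apply Multiset.count_pos.1
      by_contra h0
      have h0' : T0.count y = 0 := by omega
      rw [h0', Nat.zero_mod] at h1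
      omega
    · rw [← hT0s, aux_sum_count, aux_sum_count T0]
      apply Finset.sum_congr rfl
      intro y _
      rw [hcnt, mod_addOrderOf_nsmul]
    · intro y
      rw [hcnt]
      exact Nat.mod_lt _ (addOrderOf_pos y)
  have hTg : T.count g = 0 := Multiset.count_eq_zero.2 fun h => (hT g h).2 rfl
  set B := Multiset.replicate k g + T with hB
  have hBg : B.count g = k := by
    rw [hB, Multiset.count_add, Multiset.count_replicate_self, hTg, add_zero]
  have hBz : IsZeroSumSeq (S : Set G) B := by
    refine ⟨?_, by rw [hB, Multiset.sum_add, hTs]; simp⟩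
    intro y hy
    rcases Multiset.mem_add.1 hy with h | h
    · rw [Multiset.eq_of_mem_replicate h]; exact hg
    · exact (hT y h).1
  have hBR : B ≤ auxR S := by
    rw [Multiset.le_iff_count]
    intro y
    rw [aux_R_count]
    split_ifs with hy
    · by_cases hyg : y = g
      · rw [hyg, hBg]; exact hk2
      · rw [hB, Multiset.count_add, Multiset.count_replicate, if_neg (Ne.symm hyg), zero_add]
        exact (hTc y).le
    · have : y ∉ B := fun h => hy (hBz.1 y h)
      rw [Multiset.count_eq_zero.2 this]
  obtain ⟨C, hC⟩ := Multiset.le_iff_exists_add.1 hBR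
  have hCz : IsZeroSumSeq (S : Set G) C := by
    have h := aux_R_zs S
    rw [hC] at h
    exact aux_zs_sub hBz h
  have hCg : C ≠ 0 := by
    intro h0
    have := congrArg (Multiset.count g) hC
    rw [h0, add_zero, hBg, aux_R_count, if_pos hg] at this
    omega
  obtain ⟨L, hL1, hL2⟩ := aux_exists_fact C hCz
  have hLpos : 0 < Multiset.card L := by
    apply Multiset.card_pos.2
    intro h0
    rw [h0, Multiset.sum_zero] at hL2
    exact hCg hL2.symm
  obtain ⟨l, hl1, hl2⟩ := aux_exists_fact B hBz
  obtain ⟨A, hA, hAf⟩ : ∃ A ∈ l, ∀ x ∈ S, x ∈ A := by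
    by_contra hno
    push Not at hno
    apply hH
    exact ⟨l, fun A hA => ⟨hl1 A hA, hno A hA⟩, by rw [hl2, hBg]⟩
  have hbig := aux_full_big hmin hL hmax (hl1 A hA) hAf
  obtain ⟨l', rfl⟩ := Multiset.exists_cons_of_mem hA
  rw [Multiset.sum_cons] at hl2
  have hlen := aux_len_co hL (hl1 A hA) hbig (C := l'.sum + C)
    (by rw [hC, ← hl2, add_assoc])
    (aux_len_add ⟨l', rfl, fun A hA => hl1 A (Multiset.mem_cons_of_mem hA), rfl⟩
      ⟨L, rfl, hL1, hL2⟩)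
  have hl0 : Multiset.card l' = 0 := by omega
  rw [Multiset.card_eq_zero] at hl0
  rw [hl0, Multiset.sum_zero, add_zero] at hl2
  refine ⟨A, hl1 A hA, ?_, hbig⟩
  rw [hl2, hBg]

end AuxF

/-- If `G₀` is a minimal non-half-factorial LCN-set with
`min Δ(G₀) = max Δ*(G)`, `g ∈ G₀` with `g ∈ ⟨G₀ \ {g}⟩`, and `k ∈ [1, ord(g)]` is such
that `k·g ∉ ⟨E⟩` for every proper subset `E ⊊ G₀ \ {g}`, then there is an atom `A` over
`G₀` with `v_g(A) = k` and `k(A) > 1`. -/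
theorem stmt_15 {G : Type*} [AddCommGroup G] [Fintype G] [DecidableEq G] (G₀ : Set G)
    (hmin : IsMinNonHalfFactorial G₀) (hLCN : IsLCNSet G₀)
    (hmax : sInf (DeltaSet G₀) = sSup (DeltaStar G))
    (g : G) (hg : g ∈ G₀) (hgen : g ∈ AddSubgroup.closure (G₀ \ {g}))
    (k : ℕ) (hk1 : 1 ≤ k) (hk2 : k ≤ addOrderOf g)
    (hk : ∀ E : Set G, E ⊂ G₀ \ {g} → k • g ∉ AddSubgroup.closure E) :
    ∃ A : Multiset G, IsAtomSeq G₀ A ∧ A.count g = k ∧ 1 < crossNumber A := by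
  obtain ⟨S, rfl⟩ : ∃ S : Finset G, (S : Set G) = G₀ := ⟨G₀.toFinite.toFinset, by simp⟩
  refine aux_main hmin hLCN hmax hg hgen hk1 hk2 ?_
  intro x hx hxg
  apply hk
  refine ⟨Set.sdiff_subset, fun h => ?_⟩
  exact (h ⟨hx, hxg⟩).2 rfl
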